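/- Let Φ be a continuous flow on a compact metric space and μ an ergodic Φ-invariant measure. Suppose there exists a Borel set H with μ(H) = 1 such that ρ̃_FK(x,y) = 0 for all x, y ∈ H. Then for every finite Borel partition P and every ε > 0 there exists t_0 > 1 such that K_t(15ε, P) = 1 for all t ≥ t_0; consequently e(Φ,u) = 0 for every positive non-decreasing surjection u: ℝ^+ → ℝ^+. -/

import Mathlib

open MeasureTheory Filter Set Topology
open scoped ENNReal symmDiff

section FK

structure IsFlow {X : Type*} [TopologicalSpace X] (Φ : ℝ → X → X) : Prop where
  cont : Continuous fun p : ℝ × X => Φ p.1 p.2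
  map_zero : ∀ x, Φ 0 x = x
  map_add : ∀ t s x, Φ (t + s) x = Φ s (Φ t x)

variable {X : Type*} [MetricSpace X]

/-- `x` and `y` are `(t,ε,δ)`-matchable: there are measurable `A, A' ⊆ [0,t]` of Lebesgue
measure `> (1-ε)t` and an increasing absolutely continuous onto map `h : A → A'`
(with a.e. derivative `h'`) with `|h' - 1| < ε` and `d(φ^s x, φ^{h s} y) < δ` on `A`. -/
def Matchable (Φ : ℝ → X → X) (x y : X) (t ε δ : ℝ) : Prop :=
  ∃ (A A' : Set ℝ) (h h' : ℝ → ℝ),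
    MeasurableSet A ∧ MeasurableSet A' ∧
    A ⊆ Icc 0 t ∧ A' ⊆ Icc 0 t ∧
    ENNReal.ofReal ((1 - ε) * t) < volume A ∧
    ENNReal.ofReal ((1 - ε) * t) < volume A' ∧
    MapsTo h A A' ∧ SurjOn h A A' ∧ StrictMonoOn h A ∧
    (∀ B ⊆ A, MeasurableSet B → volume (h '' B) = ENNReal.ofReal (∫ s in B, h' s)) ∧
    (∀ s ∈ A, |h' s - 1| < ε) ∧
    (∀ s ∈ A, dist (Φ s x) (Φ (h s) y) < δ)

/-- The `(t,δ)`-gap `f̃_{t,δ}(x,y)`; by convention it equals `1` when no matching exists. -/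
noncomputable def fkGap (Φ : ℝ → X → X) (t δ : ℝ) (x y : X) : ℝ :=
  sInf ({ε : ℝ | 0 < ε ∧ Matchable Φ x y t ε δ} ∪ {1})

/-- `f̃_δ(x,y) = limsup_{t → ∞} f̃_{t,δ}(x,y)`. -/
noncomputable def fkDist (Φ : ℝ → X → X) (δ : ℝ) (x y : X) : ℝ :=
  Filter.limsup (fun t => fkGap Φ t δ x y) Filter.atTop

/-- The Feldman–Katok pseudometric for flows. -/
noncomputable def rhoFK (Φ : ℝ → X → X) (x y : X) : ℝ :=
  sInf {δ : ℝ | 0 < δ ∧ fkDist Φ δ x y < δ}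

/-- Discrete `(n,δ)`-matching of cardinality `k` for a map `T`. -/
def DMatching (T : X → X) (x y : X) (n : ℕ) (δ : ℝ) (k : ℕ) : Prop :=
  ∃ (D D' : Finset ℕ) (π : ℕ → ℕ),
    D ⊆ Finset.range n ∧ D' ⊆ Finset.range n ∧ D.card = k ∧
    Set.BijOn π ↑D ↑D' ∧ StrictMonoOn π ↑D ∧
    ∀ i ∈ D, dist (T^[i] x) (T^[π i] y) < δ

/-- The discrete `(n,δ)`-gap `f̄_{n,δ}(x,y)`. -/
noncomputable def dGap (T : X → X) (n : ℕ) (δ : ℝ) (x y : X) : ℝ :=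
  1 - ((sSup {k : ℕ | DMatching T x y n δ k} : ℕ) : ℝ) / n

/-- `f̄_δ(x,y) = limsup_{n → ∞} f̄_{n,δ}(x,y)`. -/
noncomputable def dFKdist (T : X → X) (δ : ℝ) (x y : X) : ℝ :=
  Filter.limsup (fun n : ℕ => dGap T n δ x y) Filter.atTop

/-- The discrete Feldman–Katok pseudometric. -/
noncomputable def dRhoFK (T : X → X) (x y : X) : ℝ :=
  sInf {δ : ℝ | 0 < δ ∧ dFKdist T δ x y ≤ δ}

variable [MeasurableSpace X] [BorelSpace X]

/-- The `t`-empirical measure `μ_{x,t} = (1/t) ∫_0^t δ_{φ^s x} ds`. -/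
noncomputable def empMeasure (Φ : ℝ → X → X) (x : X) (t : ℝ) : Measure X :=
  (ENNReal.ofReal (1 / t)) • Measure.map (fun s => Φ s x) (volume.restrict (Icc 0 t))

/-- `x` is generic for `μ`: empirical measures converge to `μ` in the weak* topology. -/
def Generic (Φ : ℝ → X → X) (μ : Measure X) (x : X) : Prop :=
  ∀ f : C(X, ℝ), Tendsto (fun t => ∫ z, f z ∂(empMeasure Φ x t)) atTop (𝓝 (∫ z, f z ∂μ))

def FlowInvariant (Φ : ℝ → X → X) (μ : Measure X) : Prop :=
  ∀ t : ℝ, MeasurePreserving (Φ t) μ μ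

def FlowErgodic (Φ : ℝ → X → X) (μ : Measure X) : Prop :=
  FlowInvariant Φ μ ∧
    ∀ A : Set X, MeasurableSet A → (∀ t, Φ t ⁻¹' A = A) → μ A = 0 ∨ μ A = 1

/-- The Prokhorov metric. -/
noncomputable def prokhorov (μ ν : Measure X) : ℝ :=
  sInf {ε : ℝ | 0 < ε ∧ ∀ B : Set X, MeasurableSet B →
    μ B ≤ ν (Metric.thickening ε B) + ENNReal.ofReal ε}

/-- A finite Borel partition of `X`, indexed by `ℕ` with all but finitely many cells empty. -/
structure BPartition (X : Type*) [MeasurableSpace X] where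
  cells : ℕ → Set X
  measurable : ∀ j, MeasurableSet (cells j)
  disj : Pairwise (Function.onFun Disjoint cells)
  cover : ⋃ j, cells j = Set.univ
  finite : ∃ n, ∀ j, n ≤ j → cells j = ∅

/-- The partition pseudometric `d_μ(P,Q)` (infimum over orderings of
`μ {x : P(x) ≠ Q(x)}`). -/
noncomputable def dPart (μ : Measure X) (P Q : ℕ → Set X) : ℝ :=
  ⨅ σ : Equiv.Perm ℕ, (μ (⋃ j, P j \ Q (σ j))).toReal

/-- `(t,ε,P)`-matchability with respect to a partition `P` (Ratner). -/
def PMatchable (Φ : ℝ → X → X) (P : ℕ → Set X) (x y : X) (t ε : ℝ) : Prop :=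
  ∃ (A A' : Set ℝ) (h h' : ℝ → ℝ),
    MeasurableSet A ∧ MeasurableSet A' ∧
    A ⊆ Icc 0 t ∧ A' ⊆ Icc 0 t ∧
    ENNReal.ofReal ((1 - ε) * t) < volume A ∧
    ENNReal.ofReal ((1 - ε) * t) < volume A' ∧
    MapsTo h A A' ∧ SurjOn h A A' ∧ StrictMonoOn h A ∧
    (∀ B ⊆ A, MeasurableSet B → volume (h '' B) = ENNReal.ofReal (∫ s in B, h' s)) ∧
    (∀ s ∈ A, |h' s - 1| < ε) ∧
    (∀ s ∈ A, ∀ j, Φ s x ∈ P j ↔ Φ (h s) y ∈ P j)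

/-- `f_t(x,y,P)`. -/
noncomputable def fPart (Φ : ℝ → X → X) (P : ℕ → Set X) (t : ℝ) (x y : X) : ℝ :=
  sInf ({ε : ℝ | 0 < ε ∧ PMatchable Φ P x y t ε} ∪ {1})

/-- The `(t,P)`-ball of radius `ε` centered at `x`. -/
def PBall (Φ : ℝ → X → X) (P : ℕ → Set X) (t ε : ℝ) (x : X) : Set X :=
  {y | fPart Φ P t x y < ε}

/-- `K_t(ε,P)`: minimal cardinality of an `(ε,t,P)`-cover (`⊤` if none exists). -/
noncomputable def Kt (μ : Measure X) (Φ : ℝ → X → X) (P : ℕ → Set X) (ε t : ℝ) : ℝ≥0∞ :=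
  sInf ((fun C : Finset X => (C.card : ℝ≥0∞)) ''
    {C : Finset X | ENNReal.ofReal (1 - ε) < μ (⋃ x ∈ C, PBall Φ P t ε x)})

/-- `β(u,ε,P) = liminf_{t→∞} log K_t(ε,P) / u(t)`. -/
noncomputable def betaU (μ : Measure X) (Φ : ℝ → X → X) (P : ℕ → Set X) (u : ℝ → ℝ)
    (ε : ℝ) : EReal :=
  Filter.liminf (fun t => ENNReal.log (Kt μ Φ P ε t) / (ENNReal.ofReal (u t) : EReal))
    Filter.atTop

/-- `e(u,P) = limsup_{ε→0⁺} β(u,ε,P)`. -/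
noncomputable def eUP (μ : Measure X) (Φ : ℝ → X → X) (P : ℕ → Set X) (u : ℝ → ℝ) : EReal :=
  Filter.limsup (fun ε => betaU μ Φ P u ε) (𝓝[>] (0 : ℝ))

/-- `e(Φ,u) = sup_P e(u,P)`. -/
noncomputable def ePhi (μ : Measure X) (Φ : ℝ → X → X) (u : ℝ → ℝ) : EReal :=
  ⨆ P : BPartition X, eUP μ Φ P.cells u

end FK

/-!
Encode a matching of two orbits as an increasing map of times that distorts Lebesgue measure by a
factor at most `K`. Such maps are stable under inversion and composition, and Radon–Nikodym gives
back the derivative, so matching `x` to `z` and `z` to `y` matches `x` to `y`.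

Closeness of orbits in `X` says nothing about a partition `P` near the boundaries of its cells.
By inner regularity there is, however, a set of nearly full measure on which points at distance
less than some `r > 0` lie in the same cell, and by Fubini and Markov most orbits spend only a
small proportion of their time outside it; discarding those times turns the matching of orbits into
a matching of `P`-names. Fix a point `z` at distance zero from almost every point. For large `t`
most points are matchable with `z` up to time `t`, hence with one another, so a single ball about
any good one of them covers.
-/

section TimeChange

open scoped NNReal

theorem exists_measurable_withDensity_eq_of_smul_le_of_le_smul {α : Type*} [MeasurableSpace α]
    {μ ν : Measure α} [SigmaFinite μ] [SFinite ν] {a b : ℝ≥0} (hab : a ≤ b)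
    (ha : a • μ ≤ ν) (hb : ν ≤ b • μ) :
    ∃ f : α → ℝ≥0, Measurable f ∧ (∀ x, f x ∈ Icc a b) ∧ μ.withDensity (fun x => f x) = ν := by
  have hac : ν ≪ μ :=
    (Measure.absolutelyContinuous_of_le hb).trans Measure.smul_absolutelyContinuous
  have hlow : (fun _ => (a : ℝ≥0∞)) ≤ᵐ[μ] ν.rnDeriv μ := by
    refine ae_le_of_forall_setLIntegral_le_of_sigmaFinite measurable_const fun s _ _ => ?_
    rw [setLIntegral_const, Measure.setLIntegral_rnDeriv hac]
    exact ha s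
  have hupp : ν.rnDeriv μ ≤ᵐ[μ] fun _ => (b : ℝ≥0∞) := by
    refine ae_le_of_forall_setLIntegral_le_of_sigmaFinite (Measure.measurable_rnDeriv ν μ)
      fun s _ _ => ?_
    rw [setLIntegral_const, Measure.setLIntegral_rnDeriv hac]
    exact hb s
  obtain ⟨f, hf, hfab, hfeq⟩ := (Measure.measurable_rnDeriv ν μ).aemeasurable
    |>.exists_ae_eq_range_subset (t := Icc (a : ℝ≥0∞) b)
      (by filter_upwards [hlow, hupp] with x hax hbx using ⟨hax, hbx⟩)
      ⟨a, le_rfl, ENNReal.coe_le_coe.2 hab⟩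
  have hfin : ∀ x, f x ≠ ∞ := fun x =>
    ((hfab (mem_range_self x)).2.trans_lt ENNReal.coe_lt_top).ne
  refine ⟨fun x => (f x).toNNReal, hf.ennreal_toNNReal, fun x => ?_, ?_⟩
  · have := hfab (mem_range_self x)
    rwa [← ENNReal.coe_toNNReal (hfin x), mem_Icc, ENNReal.coe_le_coe, ENNReal.coe_le_coe] at this
  · simp only [ENNReal.coe_toNNReal (hfin _)]
    rw [← withDensity_congr_ae hfeq, Measure.withDensity_rnDeriv_eq ν μ hac]

/-- A time change of distortion at most `K`: an increasing map of `A` that scales the Lebesgue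
measure of every measurable subset of `A` by a factor between `K⁻¹` and `K`. By the Radon–Nikodym
theorem this says that `h` is absolutely continuous with derivative in `[K⁻¹, K]`; unlike the
condition `|h' - 1| < ε` it is visibly stable under inversion and composition. -/
structure IsTimeChangeOn (h : ℝ → ℝ) (A : Set ℝ) (K : ℝ≥0) : Prop where
  one_le : 1 ≤ K
  measurableSet : MeasurableSet A
  strictMonoOn : StrictMonoOn h A
  volume_image_le : ∀ B ⊆ A, MeasurableSet B → volume (h '' B) ≤ K * volume B
  volume_le : ∀ B ⊆ A, MeasurableSet B → volume B ≤ K * volume (h '' B)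

namespace IsTimeChangeOn

variable {h g : ℝ → ℝ} {A B : Set ℝ} {K L : ℝ≥0}

theorem mono (H : IsTimeChangeOn h A K) (hBA : B ⊆ A) (hB : MeasurableSet B) :
    IsTimeChangeOn h B K where
  one_le := H.one_le
  measurableSet := hB
  strictMonoOn := H.strictMonoOn.mono hBA
  volume_image_le C hC := H.volume_image_le C (hC.trans hBA)
  volume_le C hC := H.volume_le C (hC.trans hBA)

protected theorem id (hA : MeasurableSet A) : IsTimeChangeOn id A 1 where
  one_le := le_rfl
  measurableSet := hA
  strictMonoOn := strictMono_id.strictMonoOn A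
  volume_image_le B _ _ := by simp
  volume_le B _ _ := by simp

theorem measurableSet_image (H : IsTimeChangeOn h A K) : MeasurableSet (h '' A) :=
  H.measurableSet.image_of_monotoneOn H.strictMonoOn.monotoneOn

theorem leftInvOn (H : IsTimeChangeOn h A K) : LeftInvOn (Function.invFunOn h A) h A :=
  H.strictMonoOn.injOn.leftInvOn_invFunOn

theorem strictMonoOn_invFunOn (H : IsTimeChangeOn h A K) :
    StrictMonoOn (Function.invFunOn h A) (h '' A) := by
  rintro _ ⟨s, hs, rfl⟩ _ ⟨r, hr, rfl⟩ hsr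
  rw [H.leftInvOn hs, H.leftInvOn hr]
  exact (H.strictMonoOn.lt_iff_lt hs hr).1 hsr

theorem invFunOn_image_inter (H : IsTimeChangeOn h A K) (B : Set ℝ) :
    Function.invFunOn h A '' (h '' A ∩ B) = A ∩ h ⁻¹' B := by
  rw [← image_inter_preimage, H.strictMonoOn.injOn.invFunOn_image inter_subset_left]

theorem measurableSet_inter_preimage (H : IsTimeChangeOn h A K) (hB : MeasurableSet B) :
    MeasurableSet (A ∩ h ⁻¹' B) := by
  rw [← H.invFunOn_image_inter]
  exact (H.measurableSet_image.inter hB).image_of_monotoneOn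
    (H.strictMonoOn_invFunOn.monotoneOn.mono inter_subset_left)

theorem volume_inter_preimage_le (H : IsTimeChangeOn h A K) (hB : MeasurableSet B) :
    volume (A ∩ h ⁻¹' B) ≤ K * volume B :=
  (H.volume_le _ inter_subset_left (H.measurableSet_inter_preimage hB)).trans
    (mul_le_mul_right (measure_mono (image_inter_preimage h A B ▸ inter_subset_right)) _)

theorem symm (H : IsTimeChangeOn h A K) :
    IsTimeChangeOn (Function.invFunOn h A) (h '' A) K := by
  have hpre : ∀ B ⊆ h '' A, MeasurableSet B →
      MeasurableSet (A ∩ h ⁻¹' B) ∧ h '' (A ∩ h ⁻¹' B) = B ∧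
        Function.invFunOn h A '' B = A ∩ h ⁻¹' B := fun B hB hBm =>
    ⟨H.measurableSet_inter_preimage hBm, by rw [image_inter_preimage, inter_eq_right.2 hB],
      by rw [← H.invFunOn_image_inter, inter_eq_right.2 hB]⟩
  refine ⟨H.one_le, H.measurableSet_image, H.strictMonoOn_invFunOn, fun B hB hBm => ?_,
    fun B hB hBm => ?_⟩ <;> obtain ⟨hm, him, hinv⟩ := hpre B hB hBm
  · simpa only [hinv, him] using H.volume_le _ inter_subset_left hm
  · simpa only [hinv, him] using H.volume_image_le _ inter_subset_left hm

theorem comp (G : IsTimeChangeOn g (h '' A) L) (H : IsTimeChangeOn h A K) :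
    IsTimeChangeOn (g ∘ h) A (L * K) where
  one_le := one_le_mul G.one_le H.one_le
  measurableSet := H.measurableSet
  strictMonoOn := G.strictMonoOn.comp H.strictMonoOn (mapsTo_image h A)
  volume_image_le B hB hBm := by
    rw [image_comp, ENNReal.coe_mul, mul_assoc]
    exact (G.volume_image_le _ (image_mono hB) (H.mono hB hBm).measurableSet_image).trans
      (mul_le_mul_right (H.volume_image_le B hB hBm) _)
  volume_le B hB hBm := by
    rw [image_comp, mul_comm L, ENNReal.coe_mul, mul_assoc]
    exact (H.volume_le B hB hBm).trans (mul_le_mul_right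
      (G.volume_le _ (image_mono hB) (H.mono hB hBm).measurableSet_image) _)

theorem of_integral {h' : ℝ → ℝ} (hK : 1 ≤ K) (hA : MeasurableSet A) (hh : StrictMonoOn h A)
    (hint : IntegrableOn h' A) (hbound : ∀ s ∈ A, h' s ∈ Icc (K : ℝ)⁻¹ K)
    (hvol : ∀ B ⊆ A, MeasurableSet B → volume (h '' B) = ENNReal.ofReal (∫ s in B, h' s)) :
    IsTimeChangeOn h A K := by
  have hK0 : K ≠ 0 := (one_pos.trans_le hK).ne'
  have hlvol : ∀ B ⊆ A, MeasurableSet B →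
      volume (h '' B) = ∫⁻ s in B, ENNReal.ofReal (h' s) := fun B hB hBm => by
    rw [hvol B hB hBm, ofReal_integral_eq_lintegral_ofReal (hint.mono_set hB)]
    filter_upwards [ae_restrict_mem hBm] with s hs
    exact (inv_nonneg.2 K.coe_nonneg).trans (hbound s (hB hs)).1
  refine ⟨hK, hA, hh, fun B hB hBm => ?_, fun B hB hBm => ?_⟩ <;> rw [hlvol B hB hBm]
  · rw [← setLIntegral_const]
    refine setLIntegral_mono measurable_const fun s hs => ?_
    rw [← ENNReal.ofReal_coe_nnreal]
    exact ENNReal.ofReal_le_ofReal (hbound s (hB hs)).2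
  · rw [← ENNReal.inv_mul_le_iff (ENNReal.coe_ne_zero.2 hK0) ENNReal.coe_ne_top,
      ← setLIntegral_const]
    refine setLIntegral_mono' hBm fun s hs => ?_
    rw [← ENNReal.coe_inv hK0, ← ENNReal.ofReal_coe_nnreal, NNReal.coe_inv]
    exact ENNReal.ofReal_le_ofReal (hbound s (hB hs)).1

theorem map_invFunOn_apply (H : IsTimeChangeOn h A K) (hB : MeasurableSet B) :
    (volume.restrict (h '' A)).map (Function.invFunOn h A) B = volume (h '' (B ∩ A)) := by
  rw [Measure.map_apply_of_aemeasurable (aemeasurable_restrict_of_monotoneOn H.measurableSet_image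
    H.strictMonoOn_invFunOn.monotoneOn) hB, Measure.restrict_apply' H.measurableSet_image,
    H.leftInvOn.image_inter']

theorem exists_density (H : IsTimeChangeOn h A K) (hA : volume A ≠ ∞) :
    ∃ h' : ℝ → ℝ, (∀ s, h' s ∈ Icc (K : ℝ)⁻¹ K) ∧
      ∀ B ⊆ A, MeasurableSet B → volume (h '' B) = ENNReal.ofReal (∫ s in B, h' s) := by
  have hK0 : K ≠ 0 := (one_pos.trans_le H.one_le).ne'
  obtain ⟨f, hf, hfK, hfν⟩ := exists_measurable_withDensity_eq_of_smul_le_of_le_smul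
    (μ := volume.restrict A) (ν := (volume.restrict (h '' A)).map (Function.invFunOn h A))
    ((inv_le_one_of_one_le₀ H.one_le).trans H.one_le)
    (Measure.le_iff.2 fun S hS => by
      rw [H.map_invFunOn_apply hS, Measure.smul_apply, Measure.restrict_apply hS, ENNReal.smul_def,
        smul_eq_mul, ENNReal.coe_inv hK0,
        ENNReal.inv_mul_le_iff (ENNReal.coe_ne_zero.2 hK0) ENNReal.coe_ne_top]
      exact H.volume_le _ inter_subset_right (hS.inter H.measurableSet))
    (Measure.le_iff.2 fun S hS => by
      rw [H.map_invFunOn_apply hS, Measure.smul_apply, Measure.restrict_apply hS]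
      exact H.volume_image_le _ inter_subset_right (hS.inter H.measurableSet))
  refine ⟨fun s => f s, fun s => by rw [← NNReal.coe_inv]; exact_mod_cast hfK s,
    fun B hB hBm => ?_⟩
  have hint : IntegrableOn (fun s => (f s : ℝ)) B :=
    Measure.integrableOn_of_bounded (M := K) (measure_ne_top_of_subset hB hA)
      hf.coe_nnreal_real.aestronglyMeasurable (ae_of_all _ fun s => by simpa using (hfK s).2)
  calc volume (h '' B)
      = (volume.restrict (h '' A)).map (Function.invFunOn h A) B := by
        rw [H.map_invFunOn_apply hBm, inter_eq_left.2 hB]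
    _ = ∫⁻ s in B, f s := by
        rw [← hfν, withDensity_apply _ hBm, Measure.restrict_restrict hBm, inter_eq_left.2 hB]
    _ = ENNReal.ofReal (∫ s in B, (f s : ℝ)) := by
        rw [ofReal_integral_eq_lintegral_ofReal hint (ae_of_all _ fun s => (f s).coe_nonneg)]
        simp only [ENNReal.ofReal_coe_nnreal]

end IsTimeChangeOn

end TimeChange

section TimeMatching

open scoped NNReal

/-- A matching of the times in `I` with each other along the relation `R`: a time change `h` of
distortion at most `K` defined on `A ⊆ I`, with values in `I` and pairing only `R`-related times,
such that its domain and its range each miss at most measure `b` of `I`. -/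
structure IsTimeMatching (R : ℝ → ℝ → Prop) (I : Set ℝ) (b : ℝ≥0∞) (K : ℝ≥0) (h : ℝ → ℝ)
    (A : Set ℝ) : Prop where
  isTimeChangeOn : IsTimeChangeOn h A K
  subset : A ⊆ I
  mapsTo : MapsTo h A I
  volume_sdiff_le : volume (I \ A) ≤ b
  volume_sdiff_image_le : volume (I \ h '' A) ≤ b
  rel : ∀ s ∈ A, R s (h s)

namespace IsTimeMatching

variable {R S : ℝ → ℝ → Prop} {I A B E : Set ℝ} {b c : ℝ≥0∞} {K L : ℝ≥0} {h g : ℝ → ℝ}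

theorem mono (H : IsTimeMatching R I b K h A) (hRS : ∀ s ∈ I, ∀ r ∈ I, R s r → S s r)
    (hbc : b ≤ c) : IsTimeMatching S I c K h A where
  isTimeChangeOn := H.isTimeChangeOn
  subset := H.subset
  mapsTo := H.mapsTo
  volume_sdiff_le := H.volume_sdiff_le.trans hbc
  volume_sdiff_image_le := H.volume_sdiff_image_le.trans hbc
  rel s hs := hRS s (H.subset hs) _ (H.mapsTo hs) (H.rel s hs)

theorem id_sdiff (hI : MeasurableSet I) (hE : MeasurableSet E) :
    IsTimeMatching (fun s r => s = r ∧ s ∉ E) I (volume (I ∩ E)) 1 id (I \ E) where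
  isTimeChangeOn := .id (hI.diff hE)
  subset := sdiff_subset
  mapsTo := fun _ hs => hs.1
  volume_sdiff_le := by rw [Set.sdiff_sdiff_right_self]
  volume_sdiff_image_le := by rw [image_id, Set.sdiff_sdiff_right_self]
  rel _ hs := ⟨rfl, hs.2⟩

theorem symm (H : IsTimeMatching R I b K h A) :
    IsTimeMatching (flip R) I b K (Function.invFunOn h A) (h '' A) := by
  have himage : Function.invFunOn h A '' (h '' A) = A :=
    H.isTimeChangeOn.strictMonoOn.injOn.invFunOn_image Subset.rfl
  refine ⟨H.isTimeChangeOn.symm, H.mapsTo.image_subset, ?_, H.volume_sdiff_image_le,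
    by rw [himage]; exact H.volume_sdiff_le, ?_⟩
  · rw [mapsTo_iff_image_subset, himage]
    exact H.subset
  · rintro _ ⟨s, hs, rfl⟩
    rw [H.isTimeChangeOn.leftInvOn hs]
    exact H.rel s hs

theorem volume_sdiff_inter_preimage_le (H : IsTimeMatching R I b K h A) (hI : MeasurableSet I)
    (hB : MeasurableSet B) : volume (I \ (A ∩ h ⁻¹' B)) ≤ b + K * volume (I \ B) := by
  have hcover : I \ (A ∩ h ⁻¹' B) ⊆ (I \ A) ∪ (A ∩ h ⁻¹' (I \ B)) := fun s ⟨hsI, hs⟩ => by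
    by_cases hsA : s ∈ A
    · exact Or.inr ⟨hsA, H.mapsTo hsA, fun hsB => hs ⟨hsA, hsB⟩⟩
    · exact Or.inl ⟨hsI, hsA⟩
  calc volume (I \ (A ∩ h ⁻¹' B))
      ≤ volume (I \ A) + volume (A ∩ h ⁻¹' (I \ B)) :=
        (measure_mono hcover).trans (measure_union_le _ _)
    _ ≤ b + K * volume (I \ B) :=
        add_le_add H.volume_sdiff_le (H.isTimeChangeOn.volume_inter_preimage_le (hI.diff hB))

theorem trans (hI : MeasurableSet I) (H : IsTimeMatching R I b K h A)
    (G : IsTimeMatching S I c L g B) :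
    IsTimeMatching (Relation.Comp R S) I (L * b + K * c) (L * K) (g ∘ h) (A ∩ h ⁻¹' B) where
  isTimeChangeOn := by
    have hD := H.isTimeChangeOn.measurableSet_inter_preimage G.isTimeChangeOn.measurableSet
    have HD := H.isTimeChangeOn.mono inter_subset_left hD
    exact (G.isTimeChangeOn.mono (image_inter_preimage h A B ▸ inter_subset_right)
      HD.measurableSet_image).comp HD
  subset := inter_subset_left.trans H.subset
  mapsTo := fun _ hs => G.mapsTo hs.2
  volume_sdiff_le := by
    refine (H.volume_sdiff_inter_preimage_le hI G.isTimeChangeOn.measurableSet).trans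
      (add_le_add ?_ (mul_le_mul_right G.volume_sdiff_le _))
    exact le_mul_of_one_le_left' (ENNReal.one_le_coe_iff.2 G.isTimeChangeOn.one_le)
  volume_sdiff_image_le := by
    rw [image_comp, image_inter_preimage, G.isTimeChangeOn.leftInvOn.image_inter', inter_comm,
      add_comm]
    refine (G.symm.volume_sdiff_inter_preimage_le hI
      H.isTimeChangeOn.measurableSet_image).trans
      (add_le_add ?_ (mul_le_mul_right H.volume_sdiff_image_le _))
    exact le_mul_of_one_le_left' (ENNReal.one_le_coe_iff.2 H.isTimeChangeOn.one_le)
  rel s hs := ⟨h s, H.rel s hs.1, G.rel (h s) hs.2⟩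

end IsTimeMatching

theorem volume_Icc_sdiff_le_of_lt_volume {A : Set ℝ} {t ε : ℝ}
    (hA : MeasurableSet A) (hAt : A ⊆ Icc 0 t) (hv : ENNReal.ofReal ((1 - ε) * t) < volume A) :
    volume (Icc 0 t \ A) ≤ ENNReal.ofReal (ε * t) := by
  rw [measure_sdiff hAt hA.nullMeasurableSet (measure_ne_top_of_subset hAt (by simp)),
    Real.volume_Icc, sub_zero, tsub_le_iff_right]
  calc ENNReal.ofReal t = ENNReal.ofReal (ε * t + (1 - ε) * t) := by ring_nf
    _ ≤ ENNReal.ofReal (ε * t) + ENNReal.ofReal ((1 - ε) * t) := ENNReal.ofReal_add_le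
    _ ≤ ENNReal.ofReal (ε * t) + volume A := by gcongr

theorem lt_volume_of_volume_Icc_sdiff_lt {A : Set ℝ} {t ε : ℝ} (ht : 0 ≤ t) (hε : ε ≤ 1)
    (hv : volume (Icc 0 t \ A) < ENNReal.ofReal (ε * t)) :
    ENNReal.ofReal ((1 - ε) * t) < volume A := by
  by_contra! hle
  have hεt : 0 < ε * t := ENNReal.ofReal_pos.1 (bot_le.trans_lt hv)
  refine lt_irrefl (ENNReal.ofReal t) ?_
  calc ENNReal.ofReal t = volume (Icc 0 t) := by simp
    _ ≤ volume (Icc 0 t \ A) + volume A :=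
      (measure_mono (subset_sdiff_union _ _)).trans (measure_union_le _ _)
    _ < ENNReal.ofReal (ε * t) + ENNReal.ofReal ((1 - ε) * t) :=
      ENNReal.add_lt_add_of_lt_of_le (hle.trans_lt ENNReal.ofReal_lt_top).ne hv hle
    _ = ENNReal.ofReal t := by
      rw [← ENNReal.ofReal_add hεt.le (mul_nonneg (sub_nonneg.2 hε) ht)]
      ring_nf

end TimeMatching

section Resolution

/-- On `K` the sets in `𝒮` are resolved at scale `r`: points of `K` at distance less than `r` lie
in the same sets of `𝒮`. -/
def HasResolutionOn {X : Type*} [PseudoMetricSpace X] (𝒮 : Set (Set X)) (K : Set X) (r : ℝ) :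
    Prop :=
  ∀ p ∈ K, ∀ q ∈ K, dist p q < r → ∀ S ∈ 𝒮, p ∈ S ↔ q ∈ S

theorem HasResolutionOn.mono {X : Type*} [PseudoMetricSpace X] {𝒮 : Set (Set X)} {K L : Set X}
    {r r' : ℝ} (h : HasResolutionOn 𝒮 L r') (hKL : K ⊆ L) (hr : r ≤ r') :
    HasResolutionOn 𝒮 K r :=
  fun p hp q hq hpq => h p (hKL hp) q (hKL hq) (hpq.trans_le hr)

variable {X : Type*} [PseudoMetricSpace X] [MeasurableSpace X] [BorelSpace X]
  {μ : Measure X} [IsFiniteMeasure μ]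

theorem exists_isClosed_measure_thickening_sdiff_le {S : Set X} (hS : MeasurableSet S) {c : ℝ≥0∞}
    (hc : c ≠ 0) :
    ∃ F ⊆ S, IsClosed F ∧ ∃ r > 0, μ ((S ∪ Metric.thickening r F) \ F) ≤ c := by
  have hc2 : c / 2 ≠ 0 := by simpa using hc
  obtain ⟨F, hFS, hF, hSF⟩ := hS.exists_isClosed_sdiff_lt (measure_ne_top μ S) hc2
  have hlim := tendsto_measure_thickening_of_isClosed ⟨1, one_pos, measure_ne_top μ _⟩ hF
  obtain ⟨r, hrF, hr⟩ := ((hlim.eventually_lt_const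
    (ENNReal.lt_add_right (measure_ne_top μ F) hc2)).and self_mem_nhdsWithin).exists
  refine ⟨F, hFS, hF, r, hr, ?_⟩
  calc μ ((S ∪ Metric.thickening r F) \ F)
      ≤ μ (S \ F) + μ (Metric.thickening r F \ F) := by
        rw [union_sdiff_distrib]
        exact measure_union_le _ _
    _ ≤ c / 2 + c / 2 := by
        refine add_le_add hSF.le ?_
        rw [measure_sdiff (Metric.self_subset_thickening hr F) hF.nullMeasurableSet
          (measure_ne_top μ F), tsub_le_iff_left]
        exact hrF.le
    _ = c := ENNReal.add_halves c

theorem exists_hasResolutionOn_singleton {S : Set X} (hS : MeasurableSet S) {c : ℝ≥0∞}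
    (hc : c ≠ 0) :
    ∃ K, MeasurableSet K ∧ μ Kᶜ ≤ c ∧ ∃ r > 0, HasResolutionOn {S} K r := by
  obtain ⟨F, hFS, hF, r, hr, hμ⟩ := exists_isClosed_measure_thickening_sdiff_le (μ := μ) hS hc
  have hKF : ∀ p ∈ F ∪ (S ∪ Metric.thickening r F)ᶜ, ∀ q ∈ F ∪ (S ∪ Metric.thickening r F)ᶜ,
      dist p q < r → p ∈ S → q ∈ S := by
    rintro p (hpF | hp) q (hqF | hq) hpq hpS
    · exact hFS hqF
    · exact absurd (Or.inr (Metric.mem_thickening_iff.2 ⟨p, hpF, dist_comm p q ▸ hpq⟩)) hq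
    · exact hFS hqF
    · exact absurd (Or.inl hpS) hp
  refine ⟨F ∪ (S ∪ Metric.thickening r F)ᶜ,
    hF.measurableSet.union (hS.union Metric.isOpen_thickening.measurableSet).compl, ?_, r, hr, ?_⟩
  · rwa [compl_union, compl_compl, inter_comm, ← sdiff_eq]
  · rintro p hp q hq hpq _ rfl
    exact ⟨hKF p hp q hq hpq, hKF q hq p hp (dist_comm p q ▸ hpq)⟩

theorem exists_hasResolutionOn_of_finite {𝒮 : Set (Set X)} (h𝒮 : 𝒮.Finite)
    (hmeas : ∀ S ∈ 𝒮, MeasurableSet S) {c : ℝ≥0∞} (hc : c ≠ 0) :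
    ∃ K, MeasurableSet K ∧ μ Kᶜ ≤ c ∧ ∃ r > 0, HasResolutionOn 𝒮 K r := by
  induction 𝒮, h𝒮 using Set.Finite.induction_on generalizing c with
  | empty => exact ⟨univ, .univ, by simp, 1, one_pos, fun _ _ _ _ _ _ h => h.elim⟩
  | @insert S 𝒮 _ _ ih =>
    have hc2 : c / 2 ≠ 0 := by simpa using hc
    obtain ⟨K, hK, hKc, r, hr, hKr⟩ :=
      exists_hasResolutionOn_singleton (μ := μ) (hmeas S (mem_insert S 𝒮)) hc2
    obtain ⟨L, hL, hLc, r', hr', hLr⟩ := ih (fun T hT => hmeas T (mem_insert_of_mem S hT)) hc2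
    refine ⟨K ∩ L, hK.inter hL, ?_, min r r', lt_min hr hr', ?_⟩
    · calc μ (K ∩ L)ᶜ ≤ μ Kᶜ + μ Lᶜ := compl_inter K L ▸ measure_union_le _ _
        _ ≤ c / 2 + c / 2 := add_le_add hKc hLc
        _ = c := ENNReal.add_halves c
    · rintro p hp q hq hpq T (hT | hT)
      · exact hKr.mono inter_subset_left (min_le_left r r') p hp q hq hpq T hT
      · exact hLr.mono inter_subset_right (min_le_right r r') p hp q hq hpq T hT

end Resolution

section OrbitMatching

open scoped NNReal

variable {X : Type*} {Φ : ℝ → X → X} {x y : X} {t ε δ : ℝ} {K : ℝ≥0}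

theorem Matchable.exists_isTimeMatching [MetricSpace X] (hε0 : 0 ≤ ε) (hε1 : ε < 1)
    (hK : 1 ≤ K * (1 - ε)) (hM : Matchable Φ x y t ε δ) :
    ∃ h A, IsTimeMatching (fun s r => dist (Φ s x) (Φ r y) < δ) (Icc 0 t)
      (ENNReal.ofReal (ε * t)) K h A := by
  obtain ⟨A, A', h, h', hA, hA', hAt, hAt', hv, hv', hmaps, hsurj, hmono, hac, hb, hd⟩ := hM
  obtain rfl : h '' A = A' := hsurj.image_eq_of_mapsTo hmaps
  have hint : IntegrableOn h' A := by
    by_contra hnot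
    have hzero : volume (h '' A) = 0 := by
      rw [hac A Subset.rfl hA, integral_undef hnot, ENNReal.ofReal_zero]
    exact not_lt_bot (hzero ▸ hv')
  have hK1 : (1 : ℝ) + ε ≤ K :=
    le_of_mul_le_mul_right (by nlinarith [hK]) (sub_pos.2 hε1)
  have hinv : (K : ℝ)⁻¹ ≤ 1 - ε := (inv_le_iff_one_le_mul₀' (by linarith)).2 hK
  have hbound : ∀ s ∈ A, h' s ∈ Icc (K : ℝ)⁻¹ K := fun s hs => by
    have hs' := abs_lt.1 (hb s hs)
    exact ⟨by linarith, by linarith⟩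
  exact ⟨h, A, .of_integral (by exact_mod_cast (le_add_of_nonneg_right hε0).trans hK1) hA hmono
      hint hbound hac, hAt, fun s hs => hAt' (hmaps hs),
    volume_Icc_sdiff_le_of_lt_volume hA hAt hv,
    volume_Icc_sdiff_le_of_lt_volume hA' hAt' hv', hd⟩

theorem IsTimeMatching.pMatchable {P : ℕ → Set X} {b : ℝ≥0∞} {h : ℝ → ℝ} {A : Set ℝ}
    (H : IsTimeMatching (fun s r => ∀ j, Φ s x ∈ P j ↔ Φ r y ∈ P j) (Icc 0 t) b K h A)
    (ht : 0 ≤ t) (hε : ε ≤ 1) (hb : b < ENNReal.ofReal (ε * t)) (hK : K < 1 + ε) :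
    PMatchable Φ P x y t ε := by
  obtain ⟨h', hK', hvol⟩ := H.isTimeChangeOn.exists_density
    (measure_ne_top_of_subset H.subset (by simp))
  have hinv : 1 - ε < (K : ℝ)⁻¹ := by
    have hK1 : (1 : ℝ) ≤ K := H.isTimeChangeOn.one_le
    rw [← one_div, lt_div_iff₀ (by linarith)]
    nlinarith
  exact ⟨A, h '' A, h, h', H.isTimeChangeOn.measurableSet, H.isTimeChangeOn.measurableSet_image,
    H.subset, H.mapsTo.image_subset,
    lt_volume_of_volume_Icc_sdiff_lt ht hε (H.volume_sdiff_le.trans_lt hb),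
    lt_volume_of_volume_Icc_sdiff_lt ht hε (H.volume_sdiff_image_le.trans_lt hb),
    mapsTo_image h A, surjOn_image h A, H.isTimeChangeOn.strictMonoOn, hvol,
    fun s _ => abs_sub_lt_iff.2 ⟨by linarith [(hK' s).2], by linarith [(hK' s).1]⟩, H.rel⟩

end OrbitMatching

section CommonBasepoint

open scoped NNReal

variable {X : Type*} [MetricSpace X] {Φ : ℝ → X → X} {P : ℕ → Set X} {x y z : X} {t δ η : ℝ}

theorem IsFlow.continuous_orbit (hΦ : IsFlow Φ) (x : X) : Continuous fun s => Φ s x :=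
  hΦ.cont.comp (continuous_id.prodMk continuous_const)

theorem IsTimeMatching.symm_trans_of_hasResolutionOn {K : Set X} {C : ℝ≥0} {b c : ℝ≥0∞}
    {h g : ℝ → ℝ} {A B I : Set ℝ} (hI : MeasurableSet I)
    (H : IsTimeMatching (fun s r => dist (Φ s z) (Φ r x) < δ) I b C h A)
    (G : IsTimeMatching (fun s r => dist (Φ s z) (Φ r y) < δ) I b C g B)
    (hK : HasResolutionOn (range P) K (2 * δ)) (hxK : MeasurableSet {s | Φ s x ∉ K})
    (hyK : MeasurableSet {s | Φ s y ∉ K}) (hxc : volume.restrict I {s | Φ s x ∉ K} ≤ c)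
    (hyc : volume.restrict I {s | Φ s y ∉ K} ≤ c) :
    ∃ f D, IsTimeMatching (fun s r => ∀ j, Φ s x ∈ P j ↔ Φ r y ∈ P j) I (2 * C * (b + C * c))
      (C * C) f D := by
  rw [Measure.restrict_apply hxK, inter_comm] at hxc
  rw [Measure.restrict_apply hyK, inter_comm] at hyc
  have Gx := ((id_sdiff hI hxK).mono (fun _ _ _ _ => id) hxc).trans hI H.symm
  have Gy := G.trans hI ((id_sdiff hI hyK).mono (fun _ _ _ _ => id) hyc)
  have M := (Gx.trans hI Gy).mono (S := fun s r => ∀ j, Φ s x ∈ P j ↔ Φ r y ∈ P j)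
    (c := 2 * C * (b + C * c)) ?_ ?_
  · rw [one_mul, mul_one] at M
    exact ⟨_, _, M⟩
  · rintro s - _ - ⟨q, ⟨_, ⟨rfl, hs⟩, hqs⟩, ⟨p, hqp, rfl, hp⟩⟩ j
    refine hK _ (not_not.1 hs) _ (not_not.1 hp) ?_ _ (mem_range_self j)
    simp only [flip] at hqs
    linarith [dist_triangle_left (Φ s x) (Φ p y) (Φ q z)]
  · simp only [ENNReal.coe_mul, ENNReal.coe_one]
    exact le_of_eq (by ring)

theorem pMatchable_of_matchable_of_matchable {K : Set X} [MeasurableSpace X] [BorelSpace X]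
    (hΦ : IsFlow Φ) (ht : 0 < t) (hη : η ≤ 1) (hδ0 : 0 < δ) (hδ : δ ≤ η / 20)
    (hx : Matchable Φ z x t δ δ) (hy : Matchable Φ z y t δ δ) (hKm : MeasurableSet K)
    (hK : HasResolutionOn (range P) K (2 * δ))
    (hxK : volume.restrict (Icc 0 t) {s | Φ s x ∉ K} ≤ ENNReal.ofReal (η / 20 * t))
    (hyK : volume.restrict (Icc 0 t) {s | Φ s y ∉ K} ≤ ENNReal.ofReal (η / 20 * t)) :
    PMatchable Φ P x y t η := by
  have hη0 : 0 < η := by linarith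
  have hbad : ∀ w, MeasurableSet {s | Φ s w ∉ K} := fun w =>
    (hΦ.continuous_orbit w).measurable hKm.compl
  have hC : (((1 + 2 * δ).toNNReal : ℝ≥0) : ℝ) = 1 + 2 * δ := Real.coe_toNNReal _ (by linarith)
  have hC1 : (1 : ℝ) ≤ (1 + 2 * δ).toNNReal * (1 - δ) := by rw [hC]; nlinarith
  obtain ⟨h, A, H⟩ := hx.exists_isTimeMatching hδ0.le (by linarith) hC1
  obtain ⟨g, B, G⟩ := hy.exists_isTimeMatching hδ0.le (by linarith) hC1
  obtain ⟨f, D, M⟩ := H.symm_trans_of_hasResolutionOn measurableSet_Icc G hK (hbad x) (hbad y)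
    hxK hyK
  refine M.pMatchable ht.le hη ?_ (by rw [NNReal.coe_mul, hC]; nlinarith)
  calc 2 * ENNReal.ofReal (1 + 2 * δ) *
        (ENNReal.ofReal (δ * t) + ENNReal.ofReal (1 + 2 * δ) * ENNReal.ofReal (η / 20 * t))
      = ENNReal.ofReal (2 * (1 + 2 * δ) * (δ * t + (1 + 2 * δ) * (η / 20 * t))) := by
        rw [← ENNReal.ofReal_mul (by linarith),
          ← ENNReal.ofReal_add (by positivity) (by positivity), ENNReal.ofReal_mul (by linarith),
          ENNReal.ofReal_mul two_pos.le, ENNReal.ofReal_ofNat]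
    _ < ENNReal.ofReal (η * t) := by
        refine (ENNReal.ofReal_lt_ofReal_iff (by positivity)).2 ?_
        calc 2 * (1 + 2 * δ) * (δ * t + (1 + 2 * δ) * (η / 20 * t))
            ≤ 2 * (1 + 2 * (1 / 20)) * (η / 20 * t + (1 + 2 * (1 / 20)) * (η / 20 * t)) := by
              gcongr <;> linarith
          _ < η * t := by nlinarith

end CommonBasepoint

section FeldmanKatokGap

variable {X : Type*} [MetricSpace X] {Φ : ℝ → X → X} {x y : X} {t ε ε' δ δ' : ℝ}

theorem Matchable.mono (ht : 0 ≤ t) (hε : ε ≤ ε') (hδ : δ ≤ δ') (hM : Matchable Φ x y t ε δ) :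
    Matchable Φ x y t ε' δ' := by
  obtain ⟨A, A', h, h', hA, hA', hAt, hAt', hv, hv', hmaps, hsurj, hmono, hac, hb, hd⟩ := hM
  have hle : ENNReal.ofReal ((1 - ε') * t) ≤ ENNReal.ofReal ((1 - ε) * t) :=
    ENNReal.ofReal_le_ofReal (mul_le_mul_of_nonneg_right (by linarith) ht)
  exact ⟨A, A', h, h', hA, hA', hAt, hAt', hle.trans_lt hv, hle.trans_lt hv', hmaps, hsurj, hmono,
    hac, fun s hs => (hb s hs).trans_le hε, fun s hs => (hd s hs).trans_le hδ⟩

theorem fkGap_nonneg (t δ : ℝ) (x y : X) : 0 ≤ fkGap Φ t δ x y :=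
  Real.sInf_nonneg fun _ he => he.elim (fun h => h.1.le) fun h => h ▸ zero_le_one

theorem fkGap_le_one (t δ : ℝ) (x y : X) : fkGap Φ t δ x y ≤ 1 :=
  csInf_le ⟨0, fun _ he => he.elim (fun h => h.1.le) fun h => h ▸ zero_le_one⟩ (Or.inr rfl)

theorem Matchable.of_fkGap_lt (ht : 0 ≤ t) (hε : ε ≤ 1) (h : fkGap Φ t δ x y < ε) :
    Matchable Φ x y t ε δ := by
  obtain ⟨ε', ⟨-, hM⟩ | rfl, hlt⟩ :=
    exists_lt_of_csInf_lt (s := {ε : ℝ | 0 < ε ∧ Matchable Φ x y t ε δ} ∪ {1}) ⟨1, Or.inr rfl⟩ h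
  · exact hM.mono ht hlt.le le_rfl
  · exact absurd hlt hε.not_gt

theorem fkDist_le_one (δ : ℝ) (x y : X) : fkDist Φ δ x y ≤ 1 :=
  limsup_le_of_le (isCoboundedUnder_le_of_le _ fun t => fkGap_nonneg t δ x y)
    (Eventually.of_forall fun t => fkGap_le_one t δ x y)

theorem eventually_matchable_of_rhoFK_lt (hδ : δ ≤ 1) (hxy : rhoFK Φ x y < δ) :
    ∀ᶠ t in atTop, Matchable Φ x y t δ δ := by
  have hne : {δ : ℝ | 0 < δ ∧ fkDist Φ δ x y < δ}.Nonempty :=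
    ⟨2, two_pos, (fkDist_le_one 2 x y).trans_lt one_lt_two⟩
  obtain ⟨δ', ⟨-, hlt⟩, hδ'⟩ := exists_lt_of_csInf_lt hne hxy
  have hbdd : IsBoundedUnder (· ≤ ·) atTop fun t => fkGap Φ t δ' x y :=
    isBoundedUnder_of ⟨1, fun t => fkGap_le_one t δ' x y⟩
  filter_upwards [eventually_lt_of_limsup_lt hlt hbdd, eventually_ge_atTop 0] with t hgap ht
  exact (Matchable.of_fkGap_lt ht (hδ'.le.trans hδ) hgap).mono ht hδ'.le hδ'.le

end FeldmanKatokGap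

section Measure

variable {X : Type*} [MeasurableSpace X] {μ : Measure X}

theorem eventually_lt_measure_of_ae_eventually {ι : Type*} {l : Filter ι} [l.IsCountablyGenerated]
    {p : ι → X → Prop} {c : ℝ≥0∞} (hp : ∀ᵐ y ∂μ, ∀ᶠ i in l, p i y) (hc : c < μ univ) :
    ∀ᶠ i in l, c < μ {y | p i y} := by
  obtain ⟨s, hs⟩ := l.exists_antitone_basis
  have hmono : Monotone fun n => {y | ∀ i ∈ s n, p i y} := fun m n hmn y hy i hi =>
    hy i (hs.antitone hmn hi)
  have hunion : (⋃ n, {y | ∀ i ∈ s n, p i y}) =ᵐ[μ] univ := by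
    refine eventuallyEq_univ.2 ?_
    filter_upwards [hp] with y hy
    simpa [hs.1.eventually_iff] using hy
  rw [← measure_congr hunion, hmono.measure_iUnion] at hc
  obtain ⟨n, hn⟩ := lt_iSup_iff.1 hc
  filter_upwards [hs.1.mem_of_mem trivial] with i hi
  exact hn.trans_le (measure_mono fun y hy => hy i hi)

theorem FlowInvariant.measure_visits_le [SFinite μ] {Φ : ℝ → X → X} {ν : Measure ℝ}
    [IsFiniteMeasure ν] [NeZero ν] (hμ : FlowInvariant Φ μ)
    (hΦ : Measurable fun p : X × ℝ => Φ p.2 p.1) {S : Set X} (hS : MeasurableSet S) {a : ℝ≥0∞}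
    (ha0 : a ≠ 0) (ha : a ≠ ∞) :
    μ {x | a * ν univ ≤ ν {s | Φ s x ∈ S}} ≤ μ S / a := by
  rw [ENNReal.le_div_iff_mul_le (.inl ha0) (.inl ha), mul_comm,
    ← ENNReal.mul_le_mul_iff_left (Measure.measure_univ_ne_zero.2 (NeZero.ne ν))
      (measure_ne_top ν univ),
    mul_right_comm]
  calc a * ν univ * μ {x | a * ν univ ≤ ν {s | Φ s x ∈ S}}
      ≤ ∫⁻ x, ν {s | Φ s x ∈ S} ∂μ :=
        mul_meas_ge_le_lintegral (measurable_measure_prodMk_left (hΦ hS)) _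
    _ = ∫⁻ s, μ (Φ s ⁻¹' S) ∂ν :=
        (Measure.prod_apply (hΦ hS)).symm.trans (Measure.prod_apply_symm (hΦ hS))
    _ = μ S * ν univ := by
        simp_rw [(hμ _).measure_preimage hS.nullMeasurableSet, lintegral_const]

theorem FlowInvariant.measure_visits_Icc_le [TopologicalSpace X] [BorelSpace X] [SFinite μ]
    {Φ : ℝ → X → X} (hμ : FlowInvariant Φ μ) (hΦ : IsFlow Φ) {S : Set X}
    (hS : MeasurableSet S) {a t : ℝ} (ha : 0 < a) (ht : 0 < t) {c : ℝ≥0∞}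
    (hc : μ S ≤ c * ENNReal.ofReal a) :
    μ {x | ENNReal.ofReal (a * t) ≤ volume.restrict (Icc 0 t) {s | Φ s x ∈ S}} ≤ c := by
  have hνt : ENNReal.ofReal a * volume.restrict (Icc 0 t) univ = ENNReal.ofReal (a * t) := by
    simp [ENNReal.ofReal_mul ha.le]
  have : NeZero (volume.restrict (Icc 0 t)) := ⟨by simp [Measure.restrict_eq_zero, ht]⟩
  have hvisits := hμ.measure_visits_le (ν := volume.restrict (Icc 0 t))
    (hΦ.cont.comp continuous_swap).measurable hS (ENNReal.ofReal_pos.2 ha).ne'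
    ENNReal.ofReal_ne_top
  rw [hνt] at hvisits
  exact hvisits.trans (ENNReal.div_le_of_le_mul hc)

end Measure

section CoveringNumbers

variable {X : Type*} {Φ : ℝ → X → X} {P : ℕ → Set X} {x y : X} {t ε η : ℝ}

theorem PMatchable.mem_pBall (hM : PMatchable Φ P x y t ε) (hε : 0 < ε) (hεη : ε < η) :
    y ∈ PBall Φ P t η x :=
  (csInf_le (s := {ε : ℝ | 0 < ε ∧ PMatchable Φ P x y t ε} ∪ {1}) ⟨0, fun _ he =>
    he.elim (fun h => h.1.le) fun h => h ▸ zero_le_one⟩ (Or.inl ⟨hε, hM⟩)).trans_lt hεη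

theorem pBall_mono (h : ε ≤ η) (x : X) : PBall Φ P t ε x ⊆ PBall Φ P t η x :=
  fun _ hy => lt_of_lt_of_le hy h

variable [MeasurableSpace X] {μ : Measure X}

theorem Kt_eq_one (hx : ENNReal.ofReal (1 - ε) < μ (PBall Φ P t ε x)) : Kt μ Φ P ε t = 1 := by
  refine le_antisymm (sInf_le ⟨{x}, by simpa using hx, by simp⟩) (le_sInf ?_)
  rintro _ ⟨C, hC, rfl⟩
  have hne : C.card ≠ 0 := by
    rintro h0
    simp [Finset.card_eq_zero.1 h0] at hC
  exact Nat.one_le_cast.2 (Nat.one_le_iff_ne_zero.2 hne)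

theorem betaU_eq_zero (u : ℝ → ℝ) (h : ∀ᶠ t in atTop, Kt μ Φ P ε t = 1) :
    betaU μ Φ P u ε = 0 := by
  have heq : (fun t => ENNReal.log (Kt μ Φ P ε t) / (ENNReal.ofReal (u t) : EReal)) =ᶠ[atTop]
      fun _ => (0 : EReal) := by
    filter_upwards [h] with t ht
    rw [ht, ENNReal.log_one, EReal.zero_div]
  rw [betaU, liminf_congr heq, liminf_const]

theorem eUP_eq_zero (u : ℝ → ℝ) (h : ∀ ε > 0, ∀ᶠ t in atTop, Kt μ Φ P ε t = 1) :
    eUP μ Φ P u = 0 := by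
  have heq : betaU μ Φ P u =ᶠ[𝓝[>] 0] fun _ => (0 : EReal) := by
    filter_upwards [self_mem_nhdsWithin] with ε hε
    exact betaU_eq_zero u (h ε hε)
  rw [eUP, limsup_congr heq, limsup_const]

theorem BPartition.finite_range_cells (P : BPartition X) : (range P.cells).Finite := by
  obtain ⟨n, hn⟩ := P.finite
  refine (((finite_Iio n).image P.cells).insert ∅).subset ?_
  rintro _ ⟨j, rfl⟩
  rcases lt_or_ge j n with hj | hj
  · exact mem_insert_of_mem _ (mem_image_of_mem _ hj)
  · exact mem_insert_iff.2 (Or.inl (hn j hj))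

instance BPartition.instNonempty : Nonempty (BPartition X) :=
  ⟨{ cells := fun j => {_x | j = 0}
     measurable := fun j => .const _
     disj := fun i j hij => disjoint_left.2 fun _ hi hj => hij (hi.trans hj.symm)
     cover := eq_univ_of_forall fun _ => mem_iUnion.2 ⟨0, rfl⟩
     finite := ⟨1, fun j hj => eq_empty_of_forall_notMem fun _ h => by
      rw [mem_ofPred_eq] at h; omega⟩ }⟩

end CoveringNumbers

section SingleBall

variable {X : Type*} [MetricSpace X] [MeasurableSpace X] [BorelSpace X] {Φ : ℝ → X → X}
  {μ : Measure X} [IsProbabilityMeasure μ] {z : X}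

theorem eventually_exists_lt_measure_pBall (hΦ : IsFlow Φ) (hμ : FlowInvariant Φ μ)
    (hz : ∀ᵐ y ∂μ, rhoFK Φ z y = 0) {P : ℕ → Set X} (hPfin : (range P).Finite)
    (hP : ∀ j, MeasurableSet (P j)) {η : ℝ} (hη0 : 0 < η) (hη : η ≤ 1) :
    ∀ᶠ t in atTop, ∃ x, ENNReal.ofReal (1 - η) < μ (PBall Φ P t η x) := by
  set a : ℝ := η / 2 / 20
  have ha0 : 0 < a := by positivity
  have ha1 : a ≤ 1 := show η / 2 / 20 ≤ 1 by linarith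
  obtain ⟨K, hK, hKμ, r, hr, hKr⟩ := exists_hasResolutionOn_of_finite (μ := μ) hPfin
    (forall_mem_range.2 hP) (c := ENNReal.ofReal (η / 2) * ENNReal.ofReal a) (by positivity)
  set δ := min a (r / 2)
  have hδ0 : 0 < δ := lt_min ha0 (by positivity)
  have hδa : δ ≤ a := min_le_left _ _
  have hδr : 2 * δ ≤ r := by linarith [min_le_right a (r / 2)]
  have hmatch : ∀ᵐ y ∂μ, ∀ᶠ t in atTop, Matchable Φ z y t δ δ := by
    filter_upwards [hz] with y hy
    exact eventually_matchable_of_rhoFK_lt (hδa.trans ha1) (hy.trans_lt hδ0)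
  have hlt : ENNReal.ofReal (1 - η / 2) < μ univ := by
    rw [measure_univ, ENNReal.ofReal_lt_one]
    linarith
  filter_upwards [eventually_lt_measure_of_ae_eventually hmatch hlt, eventually_gt_atTop 0]
    with t hM ht
  set V := {x | ENNReal.ofReal (a * t) ≤ volume.restrict (Icc 0 t) {s | Φ s x ∉ K}}
  have hV : μ V ≤ ENNReal.ofReal (η / 2) :=
    hμ.measure_visits_Icc_le hΦ hK.compl ha0 ht hKμ
  have hG : ENNReal.ofReal (1 - η) < μ ({y | Matchable Φ z y t δ δ} \ V) := by
    refine lt_of_lt_of_le ?_ le_measure_sdiff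
    rw [lt_tsub_iff_right]
    calc ENNReal.ofReal (1 - η) + μ V ≤ ENNReal.ofReal (1 - η) + ENNReal.ofReal (η / 2) := by gcongr
      _ = ENNReal.ofReal (1 - η / 2) := by
        rw [← ENNReal.ofReal_add (by linarith) (by positivity)]
        ring_nf
      _ < _ := hM
  obtain ⟨x, hx⟩ := nonempty_of_measure_ne_zero (ne_bot_of_gt hG)
  refine ⟨x, hG.trans_le (measure_mono fun y hy => ?_)⟩
  exact (pMatchable_of_matchable_of_matchable hΦ ht (by linarith) hδ0 hδa hx.1 hy.1 hK
    (hKr.mono Subset.rfl hδr) (not_le.1 hx.2).le (not_le.1 hy.2).le).mem_pBall (half_pos hη0)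
    (half_lt_self hη0)

theorem exists_forall_Kt_eq_one (hΦ : IsFlow Φ) (hμ : FlowInvariant Φ μ)
    (hz : ∀ᵐ y ∂μ, rhoFK Φ z y = 0) (P : BPartition X) {ε : ℝ} (hε : 0 < ε) :
    ∃ t₀ : ℝ, 1 < t₀ ∧ ∀ t : ℝ, t₀ ≤ t → Kt μ Φ P.cells ε t = 1 := by
  obtain ⟨T, hT⟩ := eventually_atTop.1 (eventually_exists_lt_measure_pBall hΦ hμ hz
    P.finite_range_cells P.measurable (lt_min hε one_pos) (min_le_right ε 1))
  refine ⟨max T 2, one_lt_two.trans_le (le_max_right T 2), fun t ht => ?_⟩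
  obtain ⟨x, hx⟩ := hT t ((le_max_left T 2).trans ht)
  refine Kt_eq_one (x := x) ?_
  calc ENNReal.ofReal (1 - ε) ≤ ENNReal.ofReal (1 - min ε 1) := by
        gcongr
        exact min_le_left ε 1
    _ < μ (PBall Φ P.cells t (min ε 1) x) := hx
    _ ≤ μ (PBall Φ P.cells t ε x) := measure_mono (pBall_mono (min_le_left ε 1) x)

end SingleBall

theorem stmt12_general {X : Type*} [MetricSpace X] [MeasurableSpace X] [BorelSpace X]
    {Φ : ℝ → X → X} (hΦ : IsFlow Φ) {μ : Measure X} [IsProbabilityMeasure μ]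
    (hμ : FlowInvariant Φ μ) {z : X} (hz : ∀ᵐ y ∂μ, rhoFK Φ z y = 0) :
    (∀ P : BPartition X, ∀ ε : ℝ, 0 < ε → ∃ t₀ : ℝ, 1 < t₀ ∧
        ∀ t : ℝ, t₀ ≤ t → Kt μ Φ P.cells ε t = 1) ∧
    (∀ u : ℝ → ℝ, (∀ s : ℝ, 0 ≤ s → 0 < u s) → ePhi μ Φ u = 0) := by
  have hKt := fun (P : BPartition X) ε => exists_forall_Kt_eq_one hΦ hμ hz P (ε := ε)
  refine ⟨hKt, fun u _ => ?_⟩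
  have heUP : ∀ P : BPartition X, eUP μ Φ P.cells u = 0 := fun P => eUP_eq_zero u fun ε hε =>
    (hKt P ε hε).elim fun t₀ h => eventually_atTop.2 ⟨t₀, h.2⟩
  simp only [ePhi, heUP, ciSup_const]

theorem stmt12 {X : Type*} [MetricSpace X] [CompactSpace X] [MeasurableSpace X] [BorelSpace X] (Φ : ℝ → X → X) (hΦ : IsFlow Φ)
    (μ : Measure X) [IsProbabilityMeasure μ] (hμ : FlowErgodic Φ μ)
    (H : Set X) (hHm : MeasurableSet H) (hH : μ H = 1)
    (hFK : ∀ x ∈ H, ∀ y ∈ H, rhoFK Φ x y = 0) :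
    (∀ P : BPartition X, ∀ ε : ℝ, 0 < ε → ∃ t₀ : ℝ, 1 < t₀ ∧
        ∀ t : ℝ, t₀ ≤ t → Kt μ Φ P.cells (15 * ε) t = 1) ∧
    (∀ u : ℝ → ℝ, (∀ s : ℝ, 0 ≤ s → 0 < u s) → MonotoneOn u (Set.Ici 0) →
        Set.SurjOn u (Set.Ici 0) (Set.Ioi 0) → ePhi μ Φ u = 0) := by
  obtain ⟨z, hzH⟩ : H.Nonempty := nonempty_of_measure_ne_zero (μ := μ) (by simp [hH])
  have hHae : H ∈ ae μ := (mem_ae_iff_prob_eq_one hHm).2 hH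
  have h := stmt12_general hΦ hμ.1 (z := z) (mem_of_superset hHae (hFK z hzH))
  exact ⟨fun P ε hε => h.1 P (15 * ε) (by positivity), fun u hu _ _ => h.2 u hu⟩
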